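/- A symmetric matrix P = (ρ_{ij}) ∈ [−1,1]^{3×3} with unit diagonal is the correlation matrix of some random vector with Bern(1/2) margins if and only if −1 ≤ ρ_{12} + ρ_{13} + ρ_{23} ≤ 1 + 2·min{ρ_{12}, ρ_{13}, ρ_{23}}. In particular, the 3×3 equicorrelation matrix with off-diagonal entry ρ is such a correlation matrix if and only if −1/3 ≤ ρ ≤ 1, whereas it is positive semi-definite if and only if −1/2 ≤ ρ ≤ 1. -/

import Mathlib

open MeasureTheory ProbabilityTheory Set

noncomputable section

/-- The uniform distribution on (0,1). -/
def unif01 : Measure ℝ := volume.restrict (Set.Ioo (0:ℝ) 1)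

/-- Pearson's correlation coefficient of two real random variables. -/
def pearson {Ω : Type*} [MeasurableSpace Ω] (μ : Measure Ω) (Y1 Y2 : Ω → ℝ) : ℝ :=
  ((∫ ω, Y1 ω * Y2 ω ∂μ) - (∫ ω, Y1 ω ∂μ) * (∫ ω, Y2 ω ∂μ)) /
    Real.sqrt (variance Y1 μ * variance Y2 μ)

/-- The distribution function (CDF) of a measure on ℝ. -/
def cdfOf (ν : Measure ℝ) : ℝ → ℝ := fun x => (ν (Set.Iic x)).toReal

/-- The quantile function (generalized inverse) of a distribution function. -/
def quantileFn (G : ℝ → ℝ) (p : ℝ) : ℝ := sInf {x : ℝ | p ≤ G x}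

/-- A distribution on ℝ is symmetric (about some point `m`). -/
def SymmetricDist (G : Measure ℝ) : Prop :=
  ∃ m : ℝ, G.map (fun x => 2 * m - x) = G

/-- A distribution on ℝ is non-degenerate: it is not a point mass. -/
def Nondegenerate (G : Measure ℝ) : Prop := ∀ c : ℝ, G ≠ Measure.dirac c

/-- A distribution is concordance inducing: non-degenerate, symmetric,
with finite second moment. -/
def ConcordanceInducing (G : Measure ℝ) : Prop :=
  Nondegenerate G ∧ SymmetricDist G ∧ Integrable (fun x : ℝ => x ^ 2) G

/-- `corrSet ν d` is the set of `d×d` Pearson correlation matrices of random vectors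
all of whose margins have distribution `ν`. -/
def corrSet (ν : Measure ℝ) (d : ℕ) : Set (Matrix (Fin d) (Fin d) ℝ) :=
  {P | ∃ μ : Measure (Fin d → ℝ), IsProbabilityMeasure μ ∧
        (∀ j, μ.map (fun x => x j) = ν) ∧
        (∀ i j, P i j = pearson μ (fun x => x i) (fun x => x j))}

/-- The Bernoulli distribution `Bern(p)` on ℝ. -/
def bern (p : ℝ) : Measure ℝ :=
  ENNReal.ofReal p • Measure.dirac (1:ℝ) + ENNReal.ofReal (1 - p) • Measure.dirac (0:ℝ)

/-- The set of `d×d` correlation matrices of random vectors with `Bern(1/2)` margins. -/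
def PBd (d : ℕ) : Set (Matrix (Fin d) (Fin d) ℝ) := corrSet (bern (1/2)) d

/-- The set of all `d×d` correlation matrices: symmetric positive semi-definite
matrices with entries in `[-1,1]` and unit diagonal. -/
def Pd (d : ℕ) : Set (Matrix (Fin d) (Fin d) ℝ) :=
  {P | P.IsSymm ∧ (∀ i j, P i j ∈ Set.Icc (-1:ℝ) 1) ∧ P.PosSemidef ∧ ∀ i, P i i = 1}

/-- The 3×3 equicorrelation matrix with off-diagonal entry `ρ`. -/
def equicorr3 (ρ : ℝ) : Matrix (Fin 3) (Fin 3) ℝ :=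
  Matrix.of fun i j => if i = j then (1:ℝ) else ρ

/-!
For a `Bern(1/2)` vector `X` the signs `S i = 2 * X i - 1` satisfy `P i j = 𝔼[S i * S j]`.

If `c` is an integer vector with odd coordinate sum then `∑ i, c i * S i` is an odd integer, so its
square is at least `1`; taking expectations gives `1 ≤ ∑ i j, c i * c j * P i j`. In dimension three
the choices `c ∈ {±1}³` are the inequalities of the theorem.

Conversely, correlation matrices with a given margin form a convex set, and it contains `s sᵀ` for
every sign vector `s`. In dimension three the four matrices `s sᵀ` span a tetrahedron whose four
facets are exactly the inequalities above.
-/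

section Bernoulli

variable {p : ℝ}

instance isFiniteMeasure_bern : IsFiniteMeasure (bern p) := by
  have (q x : ℝ) : IsFiniteMeasure (ENNReal.ofReal q • Measure.dirac x) :=
    Measure.smul_finite _ ENNReal.ofReal_ne_top
  exact isFiniteMeasureAdd

lemma isProbabilityMeasure_bern (hp : p ∈ Icc (0 : ℝ) 1) : IsProbabilityMeasure (bern p) := by
  constructor
  simp only [bern, Measure.add_apply, Measure.smul_apply, measure_univ, smul_eq_mul, mul_one]
  rw [← ENNReal.ofReal_add hp.1 (sub_nonneg.2 hp.2), add_sub_cancel, ENNReal.ofReal_one]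

lemma ae_bern_eq_one_or_eq_zero : ∀ᵐ x ∂bern p, x = 1 ∨ x = 0 := by
  refine ae_add_measure_iff.2 ⟨Measure.ae_smul_measure ?_ _, Measure.ae_smul_measure ?_ _⟩ <;>
    simp [ae_dirac_eq]

lemma memLp_id_bern {q : ENNReal} : MemLp id q (bern p) := by
  refine MemLp.of_bound aestronglyMeasurable_id 1 ?_
  filter_upwards [ae_bern_eq_one_or_eq_zero] with x hx
  rcases hx with rfl | rfl <;> simp

lemma integral_bern {E : Type*} [NormedAddCommGroup E] [NormedSpace ℝ E] [CompleteSpace E]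
    (hp : p ∈ Icc (0 : ℝ) 1) (f : ℝ → E) :
    ∫ x, f x ∂bern p = p • f 1 + (1 - p) • f 0 := by
  have integrable_smul_dirac (q x : ℝ) : Integrable f (ENNReal.ofReal q • Measure.dirac x) :=
    (integrable_dirac (by simp [enorm_lt_top])).smul_measure ENNReal.ofReal_ne_top
  rw [bern, integral_add_measure (integrable_smul_dirac _ _) (integrable_smul_dirac _ _),
    integral_smul_measure, integral_smul_measure, integral_dirac, integral_dirac,
    ENNReal.toReal_ofReal hp.1, ENNReal.toReal_ofReal (sub_nonneg.2 hp.2)]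

lemma integral_id_bern (hp : p ∈ Icc (0 : ℝ) 1) : ∫ x, x ∂bern p = p := by
  simp [integral_bern hp]

lemma variance_id_bern (hp : p ∈ Icc (0 : ℝ) 1) : Var[id; bern p] = p * (1 - p) := by
  rw [variance_eq_integral aemeasurable_id]
  simp only [id_eq, integral_id_bern hp, integral_bern hp, smul_eq_mul]
  ring

lemma hasLaw_one_sub_bern : HasLaw (fun x : ℝ ↦ 1 - x) (bern (1 - p)) (bern p) where
  map_eq := by
    have measurable_one_sub : Measurable fun x : ℝ ↦ 1 - x := by fun_prop
    rw [bern, Measure.map_add _ _ measurable_one_sub, Measure.map_smul, Measure.map_smul,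
      Measure.map_dirac' measurable_one_sub, Measure.map_dirac' measurable_one_sub, bern, add_comm]
    simp

end Bernoulli

section Correlation

variable {Ω : Type*} [MeasurableSpace Ω] {μ : Measure Ω} {ν : Measure ℝ} {X Y : Ω → ℝ} {d : ℕ}

lemma pearson_map {Ω' : Type*} [MeasurableSpace Ω'] {T : Ω → Ω'} {f g : Ω' → ℝ}
    (hT : AEMeasurable T μ) (hf : Measurable f) (hg : Measurable g) :
    pearson (μ.map T) f g = pearson μ (f ∘ T) (g ∘ T) := by
  rw [pearson, pearson, variance_map hf.aemeasurable hT, variance_map hg.aemeasurable hT,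
    integral_map (f := fun y ↦ f y * g y) hT (hf.mul hg).aestronglyMeasurable,
    integral_map hT hf.aestronglyMeasurable, integral_map hT hg.aestronglyMeasurable]
  rfl

lemma pearson_eq_of_hasLaw (hX : HasLaw X ν μ) (hY : HasLaw Y ν μ) :
    pearson μ X Y = (∫ ω, X ω * Y ω ∂μ - (∫ x, x ∂ν) ^ 2) / Var[id; ν] := by
  rw [pearson, hX.integral_eq, hY.integral_eq, hX.variance_eq, hY.variance_eq,
    Real.sqrt_mul_self (variance_nonneg _ _), sq]

lemma memLp_of_hasLaw {q : ENNReal} (hν : MemLp id q ν) (hX : HasLaw X ν μ) : MemLp X q μ := by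
  rw [← hX.map_eq] at hν
  exact hν.comp_of_map hX.aemeasurable

lemma integrable_mul_of_hasLaw (hν : MemLp id 2 ν) (hX : HasLaw X ν μ) (hY : HasLaw Y ν μ) :
    Integrable (fun ω ↦ X ω * Y ω) μ :=
  (memLp_of_hasLaw hν hX).integrable_mul (memLp_of_hasLaw hν hY)

lemma hasLaw_eval {ι : Type*} {μ : Measure (ι → ℝ)} {i : ι} (h : μ.map (fun x ↦ x i) = ν) :
    HasLaw (fun x ↦ x i) ν μ :=
  ⟨(measurable_pi_apply i).aemeasurable, h⟩

lemma of_pearson_mem_corrSet [IsProbabilityMeasure μ] {X : Fin d → Ω → ℝ}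
    (hX : ∀ i, HasLaw (X i) ν μ) :
    Matrix.of (fun i j ↦ pearson μ (X i) (X j)) ∈ corrSet ν d := by
  have aemeasurable_vector : AEMeasurable (fun ω i ↦ X i ω) μ :=
    aemeasurable_pi_lambda _ fun i ↦ (hX i).aemeasurable
  refine ⟨μ.map fun ω i ↦ X i ω, Measure.isProbabilityMeasure_map aemeasurable_vector,
    fun j ↦ ?_, fun i j ↦ ?_⟩
  · rw [AEMeasurable.map_map_of_aemeasurable (measurable_pi_apply j).aemeasurable
      aemeasurable_vector]
    exact (hX j).map_eq
  · rw [pearson_map aemeasurable_vector (measurable_pi_apply i) (measurable_pi_apply j)]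
    rfl

-- With the margins fixed, `pearson` is an affine function of the mixed moment alone.
lemma convex_corrSet (hν : MemLp id 2 ν) : Convex ℝ (corrSet ν d) := by
  rintro P ⟨μ, hμ, hμ_margin, hP⟩ Q ⟨η, hη, hη_margin, hQ⟩ a b ha hb hab
  have ofReal_add_eq_one : ENNReal.ofReal a + ENNReal.ofReal b = 1 := by
    rw [← ENNReal.ofReal_add ha hb, hab, ENNReal.ofReal_one]
  have mixture_margin (j : Fin d) :
      (ENNReal.ofReal a • μ + ENNReal.ofReal b • η).map (fun x ↦ x j) = ν := by
    rw [Measure.map_add _ _ (measurable_pi_apply j), Measure.map_smul, Measure.map_smul,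
      hμ_margin, hη_margin, ← add_smul, ofReal_add_eq_one, one_smul]
  refine ⟨ENNReal.ofReal a • μ + ENNReal.ofReal b • η, ⟨?_⟩, mixture_margin, fun i j ↦ ?_⟩
  · simpa using ofReal_add_eq_one
  · have integrable_mul {κ : Measure (Fin d → ℝ)} (hκ : ∀ j, κ.map (fun x ↦ x j) = ν) :
        Integrable (fun x ↦ x i * x j) κ :=
      integrable_mul_of_hasLaw hν (hasLaw_eval (hκ i)) (hasLaw_eval (hκ j))
    have pearson_eq {κ : Measure (Fin d → ℝ)} (hκ : ∀ j, κ.map (fun x ↦ x j) = ν) :=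
      pearson_eq_of_hasLaw (hasLaw_eval (hκ i)) (hasLaw_eval (hκ j))
    rw [Matrix.add_apply, Matrix.smul_apply, Matrix.smul_apply, hP, hQ, pearson_eq hμ_margin,
      pearson_eq hη_margin, pearson_eq mixture_margin,
      integral_add_measure ((integrable_mul hμ_margin).smul_measure ENNReal.ofReal_ne_top)
        ((integrable_mul hη_margin).smul_measure ENNReal.ofReal_ne_top),
      integral_smul_measure, integral_smul_measure, ENNReal.toReal_ofReal ha,
      ENNReal.toReal_ofReal hb]
    simp only [smul_eq_mul]
    linear_combination (-(∫ x, x ∂ν) ^ 2 / Var[id; ν]) * hab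

end Correlation

section BernoulliHalf

variable {Ω : Type*} [MeasurableSpace Ω] {μ : Measure Ω} {X Y : Ω → ℝ} {d : ℕ}

lemma one_half_mem_Icc : (1 / 2 : ℝ) ∈ Icc (0 : ℝ) 1 := by norm_num

lemma pearson_eq_integral_sign_mul_sign (hX : HasLaw X (bern (1 / 2)) μ)
    (hY : HasLaw Y (bern (1 / 2)) μ) :
    pearson μ X Y = ∫ ω, (2 * X ω - 1) * (2 * Y ω - 1) ∂μ := by
  have := isProbabilityMeasure_bern one_half_mem_Icc
  have := hX.isProbabilityMeasure
  have mean_eq_half {Z : Ω → ℝ} (hZ : HasLaw Z (bern (1 / 2)) μ) : ∫ ω, Z ω ∂μ = 1 / 2 := by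
    rw [hZ.integral_eq, integral_id_bern one_half_mem_Icc]
  calc
    pearson μ X Y = 4 * cov[X, Y; μ] := by
      rw [pearson_eq_of_hasLaw hX hY, integral_id_bern one_half_mem_Icc,
        variance_id_bern one_half_mem_Icc,
        covariance_eq_sub (memLp_of_hasLaw memLp_id_bern hX) (memLp_of_hasLaw memLp_id_bern hY),
        mean_eq_half hX, mean_eq_half hY]
      simp only [Pi.mul_apply]
      ring
    _ = ∫ ω, (2 * X ω - 1) * (2 * Y ω - 1) ∂μ := by
      rw [covariance, ← integral_const_mul, mean_eq_half hX, mean_eq_half hY]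
      congr with ω
      ring

/-- The value at an integer vector `c` of the quadratic form of the real matrix `P`. -/
def intQuadForm {ι : Type*} [Fintype ι] (P : Matrix ι ι ℝ) (c : ι → ℤ) : ℝ :=
  ∑ i, ∑ j, c i * c j * P i j

lemma one_le_sq_sum_mul_sign {ι : Type*} [Fintype ι] {c : ι → ℤ} (hc : Odd (∑ i, c i))
    {s : ι → ℝ} (hs : ∀ i, s i = 1 ∨ s i = -1) : 1 ≤ (∑ i, c i * s i) ^ 2 := by
  have exists_odd_cast (i : ι) : ∃ k : ℤ, Odd k ∧ s i = k := by
    rcases hs i with h | h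
    · exact ⟨1, odd_one, by simp [h]⟩
    · exact ⟨-1, odd_one.neg, by simp [h]⟩
  choose k odd_k s_eq using exists_odd_cast
  have odd_sum : Odd (∑ i, c i * k i) := by
    have even_diff : Even (∑ i, c i * (k i - 1)) :=
      Finset.even_sum _ fun i _ ↦ ((odd_k i).sub_odd odd_one).mul_left _
    convert hc.add_even even_diff using 1
    rw [← Finset.sum_add_distrib]
    exact Finset.sum_congr rfl fun i _ ↦ by ring
  have sum_ne_zero : ∑ i, c i * k i ≠ 0 := fun h ↦ by simp [h] at odd_sum
  have one_le_sq : 1 ≤ (∑ i, c i * k i) ^ 2 := Int.add_one_le_of_lt (sq_pos_of_ne_zero sum_ne_zero)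
  simp only [s_eq]
  exact_mod_cast one_le_sq

lemma one_le_intQuadForm_of_odd_sum {P : Matrix (Fin d) (Fin d) ℝ} (hP : P ∈ PBd d)
    {c : Fin d → ℤ} (hc : Odd (∑ i, c i)) :
    1 ≤ intQuadForm P c := by
  obtain ⟨μ, hμ, hmargin, hcorr⟩ := hP
  have ae_sign : ∀ᵐ x ∂μ, ∀ j, 2 * x j - 1 = 1 ∨ 2 * x j - 1 = -1 := by
    refine ae_all_iff.2 fun j ↦ ?_
    have ae_margin : ∀ᵐ y ∂μ.map (fun x ↦ x j), y = 1 ∨ y = 0 :=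
      hmargin j ▸ ae_bern_eq_one_or_eq_zero
    filter_upwards [ae_of_ae_map (measurable_pi_apply j).aemeasurable ae_margin] with x hx
    rcases hx with h | h <;> norm_num [h]
  have memLp_sign (j : Fin d) : MemLp (fun x ↦ 2 * x j - 1) 2 μ :=
    ((memLp_of_hasLaw memLp_id_bern (hasLaw_eval (hmargin j))).const_mul 2).sub (memLp_const 1)
  have memLp_sum : MemLp (fun x : Fin d → ℝ ↦ ∑ i, c i * (2 * x i - 1)) 2 μ :=
    memLp_finsetSum _ fun i _ ↦ (memLp_sign i).const_mul _
  calc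
    1 = ∫ _, (1 : ℝ) ∂μ := by simp
    _ ≤ ∫ x, (∑ i, c i * (2 * x i - 1)) ^ 2 ∂μ :=
      integral_mono_ae (integrable_const 1) memLp_sum.integrable_sq
        (ae_sign.mono fun _ hx ↦ one_le_sq_sum_mul_sign hc hx)
    _ = ∑ i, ∑ j, c i * c j * ∫ x, (2 * x i - 1) * (2 * x j - 1) ∂μ := by
      have integrable_term (i j : Fin d) :
          Integrable (fun x : Fin d → ℝ ↦ c i * c j * ((2 * x i - 1) * (2 * x j - 1))) μ :=
        ((memLp_sign i).integrable_mul (memLp_sign j)).const_mul _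
      simp only [sq, Finset.sum_mul_sum, mul_mul_mul_comm]
      rw [integral_finsetSum _ fun i _ ↦ integrable_finsetSum _ fun j _ ↦ integrable_term i j]
      refine Finset.sum_congr rfl fun i _ ↦ ?_
      rw [integral_finsetSum _ fun j _ ↦ integrable_term i j]
      simp only [integral_const_mul]
    _ = intQuadForm P c := by
      simp only [intQuadForm, hcorr,
        pearson_eq_integral_sign_mul_sign (hasLaw_eval (hmargin _)) (hasLaw_eval (hmargin _))]

lemma hasLaw_half_add_sign_mul {s : ℝ} (hs : s = 1 ∨ s = -1) :
    HasLaw (fun x ↦ 1 / 2 + s * (x - 1 / 2)) (bern (1 / 2)) (bern (1 / 2)) := by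
  rcases hs with rfl | rfl
  · convert HasLaw.id using 2 with x
    simp
  · convert hasLaw_one_sub_bern (p := 1 / 2) using 2 <;> ring

-- A single fair coin `x` drives all coordinates: the `i`-th is `x` or `1 - x` according to `s i`.
lemma vecMulVec_sign_mem_PBd {s : Fin d → ℝ} (hs : ∀ i, s i = 1 ∨ s i = -1) :
    Matrix.vecMulVec s s ∈ PBd d := by
  have := isProbabilityMeasure_bern one_half_mem_Icc
  have hasLaw_coin (i : Fin d) := hasLaw_half_add_sign_mul (hs i)
  suffices Matrix.vecMulVec s s = Matrix.of fun i j ↦ pearson (bern (1 / 2))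
      (fun x ↦ 1 / 2 + s i * (x - 1 / 2)) (fun x ↦ 1 / 2 + s j * (x - 1 / 2)) from
    this ▸ of_pearson_mem_corrSet hasLaw_coin
  ext i j
  rw [Matrix.of_apply, pearson_eq_integral_sign_mul_sign (hasLaw_coin i) (hasLaw_coin j),
    integral_bern one_half_mem_Icc, Matrix.vecMulVec_apply]
  simp only [smul_eq_mul]
  ring

end BernoulliHalf

section DimensionThree

variable {P : Matrix (Fin 3) (Fin 3) ℝ}

lemma add_add_le_one_add_two_mul_min_iff {a b c : ℝ} :
    a + b + c ≤ 1 + 2 * min (min a b) c ↔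
      b + c ≤ 1 + a ∧ a + c ≤ 1 + b ∧ a + b ≤ 1 + c := by
  have le_two_mul_min : a + b + c ≤ 1 + 2 * min (min a b) c ↔
      (a + b + c - 1) / 2 ≤ min (min a b) c := by
    constructor <;> intro h <;> linarith
  rw [le_two_mul_min, le_min_iff, le_min_iff, and_assoc]
  refine and_congr ?_ (and_congr ?_ ?_) <;> constructor <;> intro h <;> linarith

/-- The sign vectors in `ℤ³` up to a global sign. -/
def signVector : Fin 4 → Fin 3 → ℤ :=
  ![![1, 1, 1], ![-1, 1, 1], ![1, -1, 1], ![1, 1, -1]]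

lemma signVector_eq_one_or_neg_one (k : Fin 4) (i : Fin 3) :
    signVector k i = 1 ∨ signVector k i = -1 := by
  decide +revert

lemma odd_sum_signVector (k : Fin 4) : Odd (∑ i, signVector k i) := by
  decide +revert

lemma intQuadForm_signVector (hsymm : P.IsSymm) (hdiag : ∀ i, P i i = 1) (k : Fin 4) :
    intQuadForm P (signVector k) =
      ![3 + 2 * (P 0 1 + P 0 2 + P 1 2), 3 + 2 * (P 1 2 - P 0 1 - P 0 2),
        3 + 2 * (P 0 2 - P 0 1 - P 1 2), 3 + 2 * (P 0 1 - P 0 2 - P 1 2)] k := by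
  fin_cases k <;>
    simp [intQuadForm, signVector, Fin.sum_univ_three, hdiag, hsymm.apply 0 1, hsymm.apply 0 2,
      hsymm.apply 1 2] <;> ring

lemma sum_intQuadForm_signVector (hdiag : ∀ i, P i i = 1) :
    ∑ k, (intQuadForm P (signVector k) - 1) / 8 = 1 := by
  simp [intQuadForm, signVector, Fin.sum_univ_four, Fin.sum_univ_three, hdiag]
  ring

-- The coefficients are the barycentric coordinates of `P` in the tetrahedron spanned by the four
-- rank-one sign matrices.
lemma eq_sum_intQuadForm_smul_vecMulVec (hsymm : P.IsSymm) (hdiag : ∀ i, P i i = 1) :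
    P = ∑ k, ((intQuadForm P (signVector k) - 1) / 8) •
      Matrix.vecMulVec (fun i ↦ (signVector k i : ℝ)) (fun i ↦ (signVector k i : ℝ)) := by
  ext i j
  simp only [intQuadForm_signVector hsymm hdiag, Fin.sum_univ_four, Matrix.cons_val]
  fin_cases i <;> fin_cases j <;>
    simp [signVector, Matrix.vecMulVec_apply, hdiag, hsymm.apply 0 1, hsymm.apply 0 2,
      hsymm.apply 1 2] <;> ring

lemma mem_PBd_three_iff_forall_signVector (hsymm : P.IsSymm) (hdiag : ∀ i, P i i = 1) :
    P ∈ PBd 3 ↔ ∀ k, 1 ≤ intQuadForm P (signVector k) := by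
  refine ⟨fun hP k ↦ one_le_intQuadForm_of_odd_sum hP (odd_sum_signVector k), fun h ↦ ?_⟩
  rw [eq_sum_intQuadForm_smul_vecMulVec hsymm hdiag]
  refine (convex_corrSet memLp_id_bern).sum_mem (fun k _ ↦ by linarith [h k])
    (sum_intQuadForm_signVector hdiag) fun k _ ↦ vecMulVec_sign_mem_PBd fun i ↦ ?_
  exact_mod_cast signVector_eq_one_or_neg_one k i

lemma mem_PBd_three_iff (hsymm : P.IsSymm) (hdiag : ∀ i, P i i = 1) :
    P ∈ PBd 3 ↔ -1 ≤ P 0 1 + P 0 2 + P 1 2 ∧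
      P 0 1 + P 0 2 + P 1 2 ≤ 1 + 2 * min (min (P 0 1) (P 0 2)) (P 1 2) := by
  rw [mem_PBd_three_iff_forall_signVector hsymm hdiag, add_add_le_one_add_two_mul_min_iff]
  simp only [intQuadForm_signVector hsymm hdiag]
  constructor
  · intro form_ge
    have all_plus := form_ge 0
    have minus_first := form_ge 1
    have minus_second := form_ge 2
    have minus_third := form_ge 3
    simp only [Matrix.cons_val] at all_plus minus_first minus_second minus_third
    refine ⟨?_, ?_, ?_, ?_⟩ <;> linarith
  · rintro ⟨sum_ge, le_add_01, le_add_02, le_add_12⟩ k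
    fin_cases k <;> simp <;> linarith

end DimensionThree

section Equicorrelation

variable {ι : Type*} [DecidableEq ι] {ρ : ℝ}

/-- The equicorrelation matrix with off-diagonal entry `ρ` on an arbitrary index type; `equicorr3`
is the case `ι = Fin 3`. -/
def equicorr (ι : Type*) [DecidableEq ι] (ρ : ℝ) : Matrix ι ι ℝ :=
  Matrix.of fun i j ↦ if i = j then 1 else ρ

lemma equicorr3_eq_equicorr : equicorr3 ρ = equicorr (Fin 3) ρ := rfl

lemma isSymm_equicorr : (equicorr ι ρ).IsSymm := by
  ext i j
  simp [equicorr, eq_comm]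

lemma dotProduct_equicorr_mulVec [Fintype ι] (x : ι → ℝ) :
    x ⬝ᵥ (equicorr ι ρ).mulVec x = (1 - ρ) * ∑ i, x i ^ 2 + ρ * (∑ i, x i) ^ 2 := by
  have equicorr_eq : equicorr ι ρ = (1 - ρ) • 1 + ρ • Matrix.vecMulVec 1 1 := by
    ext i j
    by_cases h : i = j <;> simp [equicorr, h]
  rw [equicorr_eq, Matrix.add_mulVec, Matrix.smul_mulVec, Matrix.smul_mulVec, Matrix.one_mulVec,
    Matrix.vecMulVec_mulVec, dotProduct_add, dotProduct_smul, dotProduct_smul]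
  simp [dotProduct, sq, Finset.sum_mul]

lemma posSemidef_equicorr_iff [Fintype ι] [Nontrivial ι] :
    (equicorr ι ρ).PosSemidef ↔ 0 ≤ 1 + (Fintype.card ι - 1) * ρ ∧ ρ ≤ 1 := by
  have card_pos : (0 : ℝ) < Fintype.card ι := by exact_mod_cast Fintype.card_pos
  simp only [Matrix.posSemidef_iff_dotProduct_mulVec, star_trivial, dotProduct_equicorr_mulVec]
  constructor
  · rintro ⟨-, form_nonneg⟩
    constructor
    · have form_one := form_nonneg 1
      simp only [Pi.one_apply, one_pow, Finset.sum_const, Finset.card_univ, nsmul_eq_mul,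
        mul_one] at form_one
      refine nonneg_of_mul_nonneg_right ?_ card_pos
      linarith
    · obtain ⟨i, j, hij⟩ := exists_pair_ne ι
      have form_diff := form_nonneg (Pi.single i 1 - Pi.single j 1)
      have sum_eq : ∑ k, (Pi.single i 1 - Pi.single j 1 : ι → ℝ) k = 0 := by simp
      have sum_sq_eq : ∑ k, (Pi.single i 1 - Pi.single j 1 : ι → ℝ) k ^ 2 = 2 := by
        simp [sub_sq, Finset.sum_add_distrib, Finset.sum_sub_distrib, Pi.single_apply, hij.symm]
        norm_num
      rw [sum_eq, sum_sq_eq] at form_diff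
      linarith
  · rintro ⟨hlower, hupper⟩
    refine ⟨isSymm_equicorr, fun x ↦ ?_⟩
    have cauchy_schwarz : (∑ i, x i) ^ 2 ≤ Fintype.card ι * ∑ i, x i ^ 2 :=
      sq_sum_le_card_mul_sum_sq
    refine nonneg_of_mul_nonneg_right ?_ card_pos
    calc
      0 ≤ (1 - ρ) * (Fintype.card ι * ∑ i, x i ^ 2 - (∑ i, x i) ^ 2) +
          (1 + (Fintype.card ι - 1) * ρ) * (∑ i, x i) ^ 2 :=
        add_nonneg (mul_nonneg (sub_nonneg.2 hupper) (sub_nonneg.2 cauchy_schwarz))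
          (mul_nonneg hlower (sq_nonneg _))
      _ = Fintype.card ι * ((1 - ρ) * ∑ i, x i ^ 2 + ρ * (∑ i, x i) ^ 2) := by ring

lemma equicorr3_mem_PBd_iff : equicorr3 ρ ∈ PBd 3 ↔ -(1 / 3) ≤ ρ ∧ ρ ≤ 1 := by
  have hsymm : (equicorr3 ρ).IsSymm := isSymm_equicorr
  rw [mem_PBd_three_iff hsymm fun i ↦ by simp [equicorr3]]
  have offDiag {i j : Fin 3} (h : i ≠ j) : equicorr3 ρ i j = ρ := by simp [equicorr3, h]
  rw [offDiag (i := 0) (j := 1) (by decide), offDiag (i := 0) (j := 2) (by decide),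
    offDiag (i := 1) (j := 2) (by decide), min_self, min_self]
  constructor <;> rintro ⟨hlower, hupper⟩ <;> constructor <;> linarith

lemma posSemidef_equicorr3_iff : (equicorr3 ρ).PosSemidef ↔ -(1 / 2) ≤ ρ ∧ ρ ≤ 1 := by
  rw [equicorr3_eq_equicorr, posSemidef_equicorr_iff, Fintype.card_fin]
  norm_num
  intro
  constructor <;> intro h <;> linarith

end Equicorrelation

/-- a symmetric 3×3 matrix with unit diagonal and entries in `[-1,1]` is
the correlation matrix of a random vector with `Bern(1/2)` margins iff
`−1 ≤ ρ12 + ρ13 + ρ23 ≤ 1 + 2·min{ρ12, ρ13, ρ23}`. In particular, the 3×3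
equicorrelation matrix lies in `P^B_3(1/2)` iff `−1/3 ≤ ρ ≤ 1`, while it is positive
semi-definite iff `−1/2 ≤ ρ ≤ 1`. -/
theorem bernoulli_compatibility_dim3 :
    (∀ P : Matrix (Fin 3) (Fin 3) ℝ, P.IsSymm →
      (∀ i j, P i j ∈ Set.Icc (-1:ℝ) 1) → (∀ i, P i i = 1) →
      (P ∈ PBd 3 ↔
        (-1 ≤ P 0 1 + P 0 2 + P 1 2 ∧
          P 0 1 + P 0 2 + P 1 2 ≤ 1 + 2 * min (min (P 0 1) (P 0 2)) (P 1 2)))) ∧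
    (∀ ρ : ℝ,
      (equicorr3 ρ ∈ PBd 3 ↔ (-(1/3) ≤ ρ ∧ ρ ≤ 1)) ∧
      ((equicorr3 ρ).PosSemidef ↔ (-(1/2) ≤ ρ ∧ ρ ≤ 1))) :=
  ⟨fun _ hsymm _ hdiag ↦ mem_PBd_three_iff hsymm hdiag,
    fun _ ↦ ⟨equicorr3_mem_PBd_iff, posSemidef_equicorr3_iff⟩⟩
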